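/- Let T be a tree, let 𝒜_T denote its set of static-included vertices and 𝒩_T its set of static-excluded vertices. Suppose u ∈ 𝒩_T is adjacent to exactly p isolated vertices of the induced subgraph T[𝒜_T] and to exactly q end-vertices of isolated edges of T[𝒜_T]. Then p + 2q ≥ 4 or p = 3. Consequently, if 𝒩_T ≠ ∅ then |𝒜_T| ≥ 3. -/

import Mathlib

/-!
If `S` and `R` are maximum dissociation sets and neither contains the end `u` of a bridge `uv`,
then exchanging them on the `v`-side of the bridge yields two dissociation sets of the same total
size, so both are again maximum. Doing this at the edges of a static-excluded vertex `u` produces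
a maximum dissociation set `S` whose only neighbours of `u` are the static-included ones. A similar
exchange produces a maximum dissociation set in which a given isolated vertex of `G[𝒜_G]` has no
neighbour.

On the other hand, if some `w` could be removed from `S` so that `u` has at most one neighbour left
and that neighbour is isolated, then replacing `w` by `u` would give a maximum dissociation set
containing `u`. Hence `u` has at least two static-included neighbours, and at least three if one of
them is isolated in `G[𝒜_G]`. Bridges lie in no triangle, so if one of them is an end of an isolated
edge of `G[𝒜_G]`, then the other end is a further static-included vertex.
-/

open SimpleGraph

/-- `l` is a (not necessarily induced) `k`-path in `G`: a list of `k` pairwise distinct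
vertices in which consecutive vertices are adjacent. -/
def IsKPath {V : Type*} (G : SimpleGraph V) (k : ℕ) (l : List V) : Prop :=
  l.length = k ∧ l.Nodup ∧ l.Chain' G.Adj

/-- A `k`-matching in `G`: a finite set of pairwise vertex-disjoint `k`-paths. -/
def IsKMatching {V : Type*} (G : SimpleGraph V) (k : ℕ) (M : Finset (List V)) : Prop :=
  (∀ l ∈ M, IsKPath G k l) ∧
    (M : Set (List V)).Pairwise fun l₁ l₂ => ∀ v ∈ l₁, v ∉ l₂

/-- The `k`-matching number `μ_k(G)`: the maximum cardinality of a `k`-matching. -/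
noncomputable def kMatchNum {V : Type*} (G : SimpleGraph V) (k : ℕ) : ℕ :=
  sSup {n | ∃ M : Finset (List V), IsKMatching G k M ∧ M.card = n}

/-- A maximum `k`-matching: a `k`-matching of cardinality `μ_k(G)`. -/
def IsMaxKMatching {V : Type*} (G : SimpleGraph V) (k : ℕ) (M : Finset (List V)) : Prop :=
  IsKMatching G k M ∧ M.card = kMatchNum G k

/-- A `k`-independent set: a set of vertices whose induced subgraph contains no `k`-path. -/
def IsKIndepSet {V : Type*} (G : SimpleGraph V) (k : ℕ) (S : Finset V) : Prop :=
  ∀ l : List V, IsKPath G k l → ¬ (∀ v ∈ l, v ∈ S)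

/-- The `k`-independence number `α_k(G)`. -/
noncomputable def kIndepNum {V : Type*} (G : SimpleGraph V) (k : ℕ) : ℕ :=
  sSup {n | ∃ S : Finset V, IsKIndepSet G k S ∧ S.card = n}

/-- A `k`-vertex cover: a set of vertices meeting every `k`-path of `G`. -/
def IsKCover {V : Type*} (G : SimpleGraph V) (k : ℕ) (C : Finset V) : Prop :=
  ∀ l : List V, IsKPath G k l → ∃ v ∈ l, v ∈ C

/-- The `k`-vertex cover number `τ_k(G)`. -/
noncomputable def kCoverNum {V : Type*} (G : SimpleGraph V) (k : ℕ) : ℕ :=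
  sInf {n | ∃ C : Finset V, IsKCover G k C ∧ C.card = n}

/-- A dissociation set: a set of vertices inducing a subgraph of maximum degree at most 1,
i.e. every vertex of `S` has at most one neighbour inside `S`. -/
def IsDissocSet {V : Type*} (G : SimpleGraph V) (S : Finset V) : Prop :=
  ∀ v ∈ S, ∀ u ∈ S, ∀ w ∈ S, G.Adj v u → G.Adj v w → u = w

/-- The dissociation number `α₃(G)`. -/
noncomputable def dissNum {V : Type*} (G : SimpleGraph V) : ℕ :=
  sSup {n | ∃ S : Finset V, IsDissocSet G S ∧ S.card = n}

/-- A maximum dissociation set: a dissociation set of cardinality `α₃(G)`. -/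
def IsMaxDissocSet {V : Type*} (G : SimpleGraph V) (S : Finset V) : Prop :=
  IsDissocSet G S ∧ S.card = dissNum G

/-- `uv` is an `α₃`-critical edge of `G`: deleting it increases the dissociation number. -/
def IsAlpha3Critical {V : Type*} (G : SimpleGraph V) (u v : V) : Prop :=
  G.Adj u v ∧ dissNum G < dissNum (G.deleteEdges {s(u, v)})

/-- `uv` is a `μ₃`-critical edge of `G`: deleting it decreases the `3`-matching number. -/
def IsMu3Critical {V : Type*} (G : SimpleGraph V) (u v : V) : Prop :=
  G.Adj u v ∧ kMatchNum (G.deleteEdges {s(u, v)}) 3 < kMatchNum G 3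

/-- An insulated `α₃`-critical edge: an `α₃`-critical edge sharing no end-vertex with any
other `α₃`-critical edge. -/
def IsInsulated {V : Type*} (G : SimpleGraph V) (u v : V) : Prop :=
  IsAlpha3Critical G u v ∧
    ∀ x y : V, IsAlpha3Critical G x y → s(x, y) ≠ s(u, v) →
      x ≠ u ∧ x ≠ v ∧ y ≠ u ∧ y ≠ v

/-- A flexible vertex: one lying in some but not all maximum dissociation sets. -/
def IsFlexible {V : Type*} (G : SimpleGraph V) (v : V) : Prop :=
  (∃ S : Finset V, IsMaxDissocSet G S ∧ v ∈ S) ∧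
    (∃ S : Finset V, IsMaxDissocSet G S ∧ v ∉ S)

/-- The set of static-included vertices: vertices lying in every maximum dissociation set. -/
def staticIncluded {V : Type*} (G : SimpleGraph V) : Set V :=
  {v | ∀ S : Finset V, IsMaxDissocSet G S → v ∈ S}

/-- The set of static-excluded vertices: vertices lying in no maximum dissociation set. -/
def staticExcluded {V : Type*} (G : SimpleGraph V) : Set V :=
  {v | ∀ S : Finset V, IsMaxDissocSet G S → v ∉ S}

/-- The (unordered) edge `uv` occurs as an edge of the path recorded by the list `l`. -/
def EdgeInList {V : Type*} (l : List V) (u v : V) : Prop :=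
  ∃ p ∈ l.zip l.tail, p = (u, v) ∨ p = (v, u)

section Splice

variable {V : Type*} {G : SimpleGraph V} {B : Set V} {S R : Finset V}

open Classical in
/-- The finset which agrees with `S` on `B` and with `R` off `B`; the finset counterpart of
`Set.ite`, used to exchange two dissociation sets on one side of a bridge. -/
noncomputable def splice (B : Set V) (S R : Finset V) : Finset V :=
  {x ∈ S | x ∈ B} ∪ {x ∈ R | x ∉ B}

theorem mem_splice {x : V} : x ∈ splice B S R ↔ x ∈ S ∧ x ∈ B ∨ x ∈ R ∧ x ∉ B := by
  simp [splice]

theorem card_splice_add_card_splice (B : Set V) (S R : Finset V) :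
    (splice B S R).card + (splice B R S).card = S.card + R.card := by
  classical
  have card_splice (S R : Finset V) :
      (splice B S R).card = {x ∈ S | x ∈ B}.card + {x ∈ R | x ∉ B}.card :=
    Finset.card_union_of_disjoint (Finset.disjoint_filter_filter_not S R _)
  have hS := Finset.card_filter_add_card_filter_not (s := S) (· ∈ B)
  have hR := Finset.card_filter_add_card_filter_not (s := R) (· ∈ B)
  rw [card_splice, card_splice]
  omega

theorem IsDissocSet.splice (hS : IsDissocSet G S) (hR : IsDissocSet G R)
    (hSR : ∀ x ∈ S, x ∈ B → ∀ y ∈ R, y ∉ B → ¬ G.Adj x y) : IsDissocSet G (splice B S R) := by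
  intro a ha b hb c hc hab hac
  rw [mem_splice] at ha hb hc
  rcases ha with ⟨haS, haB⟩ | ⟨haR, haB⟩
  · rcases hb with ⟨hbS, -⟩ | ⟨hbR, hbB⟩
    · rcases hc with ⟨hcS, -⟩ | ⟨hcR, hcB⟩
      · exact hS a haS b hbS c hcS hab hac
      · exact absurd hac (hSR a haS haB c hcR hcB)
    · exact absurd hab (hSR a haS haB b hbR hbB)
  · rcases hb with ⟨hbS, hbB⟩ | ⟨hbR, -⟩
    · exact absurd hab.symm (hSR b hbS hbB a haR haB)
    · rcases hc with ⟨hcS, hcB⟩ | ⟨hcR, -⟩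
      · exact absurd hac.symm (hSR c hcS hcB a haR haB)
      · exact hR a haR b hbR c hcR hab hac

end Splice

section DissocSet

variable {V : Type*} {G : SimpleGraph V} {S S' : Finset V}

theorem IsDissocSet.subset (hS : IsDissocSet G S) (h : S' ⊆ S) : IsDissocSet G S' :=
  fun v hv u hu w hw => hS v (h hv) u (h hu) w (h hw)

theorem IsDissocSet.insert [DecidableEq V] {u : V} (hS : IsDissocSet G S)
    (hu : ∀ x ∈ S, ∀ y ∈ S, G.Adj u x → G.Adj u y → x = y)
    (hiso : ∀ x ∈ S, G.Adj u x → ∀ y ∈ S, ¬ G.Adj x y) : IsDissocSet G (insert u S) := by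
  intro a ha b hb c hc hab hac
  rw [Finset.mem_insert] at ha hb hc
  rcases ha with rfl | ha
  · exact hu b (hb.resolve_left hab.ne') c (hc.resolve_left hac.ne') hab hac
  · rcases hb with rfl | hb <;> rcases hc with rfl | hc
    · rfl
    · exact absurd hac (hiso a ha hab.symm c hc)
    · exact absurd hab (hiso a ha hac.symm b hb)
    · exact hS a ha b hb c hc hab hac

variable [Finite V]

theorem bddAbove_card_isDissocSet (G : SimpleGraph V) :
    BddAbove {n | ∃ S : Finset V, IsDissocSet G S ∧ S.card = n} := by
  have := Fintype.ofFinite V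
  refine ⟨Fintype.card V, ?_⟩
  rintro _ ⟨S, -, rfl⟩
  exact S.card_le_univ

theorem IsDissocSet.card_le_dissNum (hS : IsDissocSet G S) : S.card ≤ dissNum G :=
  le_csSup (bddAbove_card_isDissocSet G) ⟨S, hS, rfl⟩

theorem IsDissocSet.isMaxDissocSet (hS : IsDissocSet G S) (h : dissNum G ≤ S.card) :
    IsMaxDissocSet G S :=
  ⟨hS, hS.card_le_dissNum.antisymm h⟩

theorem exists_isMaxDissocSet (G : SimpleGraph V) : ∃ S, IsMaxDissocSet G S :=
  Nat.sSup_mem (s := {n | ∃ S : Finset V, IsDissocSet G S ∧ S.card = n})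
    ⟨0, ∅, by simp [IsDissocSet], rfl⟩ (bddAbove_card_isDissocSet G)

theorem not_isDissocSet_insert_erase [DecidableEq V] {u : V} (hu : u ∈ staticExcluded G)
    (hS : IsMaxDissocSet G S) (w : V) : ¬ IsDissocSet G (insert u (S.erase w)) := by
  intro hins
  have hcard : (insert u (S.erase w)).card = (S.erase w).card + 1 :=
    Finset.card_insert_of_notMem fun h => hu S hS (Finset.mem_of_mem_erase h)
  have herase : S.card - 1 ≤ (S.erase w).card := Finset.pred_card_le_card_erase
  have hmax := hS.2
  exact hu _ (hins.isMaxDissocSet (by omega)) (Finset.mem_insert_self _ _)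

end DissocSet

section Bridge

variable {V : Type*} {G : SimpleGraph V} {u v : V} {S R : Finset V}

/-- The branch at `v` of the edge `uv`: the vertices joined to `v` by a walk avoiding that edge.
When `uv` is a bridge, this is the side of `v`. -/
def branch (G : SimpleGraph V) (u v : V) : Set V :=
  {x | (G.deleteEdges {s(u, v)}).Reachable v x}

theorem self_mem_branch (G : SimpleGraph V) (u v : V) : v ∈ branch G u v :=
  Reachable.refl v

theorem notMem_branch (h : G.IsBridge s(u, v)) : u ∉ branch G u v :=
  fun hu => isBridge_iff.1 h hu.symm

theorem eq_and_eq_of_adj_of_mem_branch (h : G.IsBridge s(u, v)) {x y : V}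
    (hx : x ∈ branch G u v) (hy : y ∉ branch G u v) (hxy : G.Adj x y) : x = v ∧ y = u := by
  have he : s(x, y) = s(u, v) := by
    by_contra hne
    have hadj : (G.deleteEdges {s(u, v)}).Adj x y := deleteEdges_adj.2 ⟨hxy, hne⟩
    exact hy (Reachable.trans hx hadj.reachable)
  rcases Sym2.eq_iff.1 he with ⟨rfl, -⟩ | hvu
  · exact absurd hx (notMem_branch h)
  · exact hvu

theorem not_adj_of_adj_of_isBridge (h : G.IsBridge s(u, v)) {x : V} (hvx : G.Adj v x) :
    ¬ G.Adj u x := by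
  intro hux
  have hx : x ∈ branch G u v := by
    by_contra hx
    exact hux.ne' (eq_and_eq_of_adj_of_mem_branch h (self_mem_branch G u v) hx hvx).2
  exact hvx.ne' (eq_and_eq_of_adj_of_mem_branch h hx (notMem_branch h) hux.symm).1

theorem eq_of_adj_of_mem_splice_branch (h : G.IsBridge s(u, v)) {x : V}
    (hx : x ∈ splice (branch G u v) S R) (hux : G.Adj u x) : x ∈ S ∧ x = v ∨ x ∈ R :=
  (mem_splice.1 hx).imp
    (fun hx => ⟨hx.1, (eq_and_eq_of_adj_of_mem_branch h hx.2 (notMem_branch h) hux.symm).1⟩)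
    And.left

theorem IsDissocSet.splice_branch (h : G.IsBridge s(u, v)) (hS : IsDissocSet G S)
    (hR : IsDissocSet G R) (huv : v ∉ S ∨ u ∉ R) :
    IsDissocSet G (_root_.splice (branch G u v) S R) := by
  refine hS.splice hR fun x hxS hxB y hyR hyB hxy => ?_
  obtain ⟨rfl, rfl⟩ := eq_and_eq_of_adj_of_mem_branch h hxB hyB hxy
  exact huv.elim (· hxS) (· hyR)

variable [Finite V]

theorem IsMaxDissocSet.splice_branch (h : G.IsBridge s(u, v)) (hS : IsMaxDissocSet G S)
    (hR : IsMaxDissocSet G R) (huS : u ∉ S) (huR : u ∉ R) :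
    IsMaxDissocSet G (splice (branch G u v) S R) := by
  have hSR := hS.1.splice_branch h hR.1 (.inr huR)
  have hRS := (hR.1.splice_branch h hS.1 (.inr huS)).card_le_dissNum
  have hsum := card_splice_add_card_splice (branch G u v) S R
  exact hSR.isMaxDissocSet (by rw [hS.2, hR.2] at hsum; omega)

theorem IsMaxDissocSet.splice_branch_of_mem_staticIncluded (h : G.IsBridge s(u, v))
    (hu : u ∈ staticIncluded G) (hS : IsMaxDissocSet G S) (hR : IsMaxDissocSet G R)
    (hvS : v ∉ S) : IsMaxDissocSet G (splice (branch G u v) S R) := by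
  classical
  have hSR := hS.1.splice_branch h hR.1 (.inl hvS)
  -- The opposite exchange may contain both ends of the bridge. Without `u` it is a dissociation
  -- set, but not a maximum one since `u` is static-included.
  have hRS : IsDissocSet G (splice (branch G u v) R (S.erase u)) :=
    hR.1.splice_branch h (hS.1.subset (S.erase_subset u)) (.inr (S.notMem_erase u))
  have hlt : (splice (branch G u v) R (S.erase u)).card < dissNum G := by
    refine hRS.card_le_dissNum.lt_of_ne fun hcard => ?_
    simpa [mem_splice, notMem_branch h] using hu _ ⟨hRS, hcard⟩
  have herase : splice (branch G u v) (S.erase u) R = splice (branch G u v) S R := by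
    ext x
    have hxu : x ∈ branch G u v → x ≠ u := fun hx hxu => notMem_branch h (hxu ▸ hx)
    simp only [mem_splice, Finset.mem_erase]
    tauto
  have hsum := card_splice_add_card_splice (branch G u v) R (S.erase u)
  have hcard := Finset.card_erase_add_one (hu S hS)
  rw [herase, hR.2] at hsum
  rw [hS.2] at hcard
  exact hSR.isMaxDissocSet (by omega)

theorem exists_isMaxDissocSet_forall_adj_mem_staticIncluded
    (hb : ∀ v, G.Adj u v → G.IsBridge s(u, v)) (hu : u ∈ staticExcluded G) :
    ∃ S, IsMaxDissocSet G S ∧ ∀ v ∈ S, G.Adj u v → v ∈ staticIncluded G := by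
  classical
  obtain ⟨S, hS, hmin⟩ := Set.exists_min_image {S : Finset V | IsMaxDissocSet G S}
    (fun S => {x ∈ S | G.Adj u x}.card) (Set.toFinite _) (exists_isMaxDissocSet G)
  refine ⟨S, hS, fun v hvS huv => ?_⟩
  by_contra hv
  obtain ⟨R, hR, hvR⟩ : ∃ R, IsMaxDissocSet G R ∧ v ∉ R := by
    simpa [staticIncluded] using hv
  have hmax := hR.splice_branch (hb v huv) hS (hu R hR) (hu S hS)
  have hssub : {x ∈ splice (branch G u v) R S | G.Adj u x} ⊂ {x ∈ S | G.Adj u x} := by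
    refine (Finset.ssubset_iff_of_subset fun x hx => ?_).2 ⟨v, by simp [hvS, huv], ?_⟩
    · rw [Finset.mem_filter] at hx ⊢
      refine ⟨(eq_of_adj_of_mem_splice_branch (hb v huv) hx.1 hx.2).resolve_left ?_, hx.2⟩
      rintro ⟨hxR, rfl⟩
      exact hvR hxR
    · simp [mem_splice, hvR, self_mem_branch]
  exact (Finset.card_lt_card hssub).not_ge (hmin _ hmax)

theorem exists_isMaxDissocSet_forall_not_adj (hb : ∀ x, G.Adj v x → G.IsBridge s(v, x))
    (hv : v ∈ staticIncluded G) (hiso : ∀ x ∈ staticIncluded G, ¬ G.Adj v x) :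
    ∃ S, IsMaxDissocSet G S ∧ ∀ x ∈ S, ¬ G.Adj v x := by
  obtain ⟨S, hS⟩ := exists_isMaxDissocSet G
  by_cases hvS : ∀ x ∈ S, ¬ G.Adj v x
  · exact ⟨S, hS, hvS⟩
  push Not at hvS
  obtain ⟨x, hxS, hvx⟩ := hvS
  obtain ⟨R, hR, hxR⟩ : ∃ R, IsMaxDissocSet G R ∧ x ∉ R := by
    simpa [staticIncluded] using fun hx => hiso x hx hvx
  have hmax := hR.splice_branch_of_mem_staticIncluded (hb x hvx) hv hS hxR
  refine ⟨_, hmax, fun y hy hvy => ?_⟩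
  -- In `S` the only neighbour of `v` is `x`, which the exchange has removed.
  rcases eq_of_adj_of_mem_splice_branch (hb x hvx) hy hvy with ⟨hyR, rfl⟩ | hyS
  · exact hxR hyR
  · obtain rfl : x = y := hS.1 v (hv S hS) x hxS y hyS hvx hvy
    simp [mem_splice, hxR, self_mem_branch] at hy

theorem exists_isMaxDissocSet_forall_adj_mem_staticIncluded_and_not_adj
    (hbu : ∀ x, G.Adj u x → G.IsBridge s(u, x)) (hbv : ∀ x, G.Adj v x → G.IsBridge s(v, x))
    (hu : u ∈ staticExcluded G) (hv : v ∈ staticIncluded G)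
    (hiso : ∀ x ∈ staticIncluded G, ¬ G.Adj v x) (huv : G.Adj u v) :
    ∃ S, IsMaxDissocSet G S ∧ (∀ x ∈ S, G.Adj u x → x ∈ staticIncluded G) ∧
      ∀ x ∈ S, ¬ G.Adj v x := by
  obtain ⟨S, hS, hSu⟩ := exists_isMaxDissocSet_forall_adj_mem_staticIncluded hbu hu
  obtain ⟨R, hR, hRv⟩ := exists_isMaxDissocSet_forall_not_adj hbv hv hiso
  refine ⟨_, hR.splice_branch (hbu v huv) hS (hu R hR) (hu S hS), fun x hx hux => ?_,
    fun x hx hvx => ?_⟩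
  · rcases eq_of_adj_of_mem_splice_branch (hbu v huv) hx hux with ⟨-, rfl⟩ | hxS
    · exact hv
    · exact hSu x hxS hux
  · rcases mem_splice.1 hx with ⟨hxR, -⟩ | ⟨hxS, hxB⟩
    · exact hRv x hxR hvx
    · obtain ⟨-, rfl⟩ :=
        eq_and_eq_of_adj_of_mem_branch (hbu v huv) (self_mem_branch G u v) hxB hvx
      exact hu S hS hxS

end Bridge

section StaticIncludedNeighbors

variable {V : Type*} {G : SimpleGraph V} {u : V}

/-- The neighbours of `u` that are isolated vertices of `G[𝒜_G]`; their number is the paper's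
`p`. -/
def isolatedVertexNeighbors (G : SimpleGraph V) (u : V) : Set V :=
  {w | w ∈ staticIncluded G ∧ (∀ x ∈ staticIncluded G, ¬ G.Adj w x) ∧ G.Adj u w}

/-- The neighbours of `u` that are end-vertices of isolated edges of `G[𝒜_G]`; their number is the
paper's `q`. -/
def isolatedEdgeNeighbors (G : SimpleGraph V) (u : V) : Set V :=
  {w | w ∈ staticIncluded G ∧
    (∃ x ∈ staticIncluded G, G.Adj w x ∧
      (∀ y ∈ staticIncluded G, G.Adj w y → y = x) ∧
      (∀ y ∈ staticIncluded G, G.Adj x y → y = w)) ∧ G.Adj u w}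

variable [Finite V]

theorem two_le_ncard_staticIncluded_inter_neighborSet
    (hb : ∀ v, G.Adj u v → G.IsBridge s(u, v)) (hu : u ∈ staticExcluded G) :
    2 ≤ (staticIncluded G ∩ G.neighborSet u).ncard := by
  classical
  obtain ⟨S, hS, hSu⟩ := exists_isMaxDissocSet_forall_adj_mem_staticIncluded hb hu
  by_contra! hlt
  have : Nonempty V := ⟨u⟩
  obtain ⟨w, hw⟩ := (Set.ncard_le_one_iff_subset_singleton
    (s := staticIncluded G ∩ G.neighborSet u)).1 (by omega)
  have not_adj (x : V) (hx : x ∈ S.erase w) : ¬ G.Adj u x := fun hux =>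
    Finset.ne_of_mem_erase hx (hw ⟨hSu x (Finset.mem_of_mem_erase hx) hux, hux⟩)
  exact not_isDissocSet_insert_erase hu hS w <| (hS.1.subset (S.erase_subset w)).insert
    (fun x hx _ _ hux => absurd hux (not_adj x hx)) fun x hx hux => absurd hux (not_adj x hx)

theorem three_le_ncard_staticIncluded_inter_neighborSet {v : V}
    (hbu : ∀ x, G.Adj u x → G.IsBridge s(u, x)) (hbv : ∀ x, G.Adj v x → G.IsBridge s(v, x))
    (hu : u ∈ staticExcluded G) (hv : v ∈ staticIncluded G)
    (hiso : ∀ x ∈ staticIncluded G, ¬ G.Adj v x) (huv : G.Adj u v) :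
    3 ≤ (staticIncluded G ∩ G.neighborSet u).ncard := by
  classical
  obtain ⟨S, hS, hSu, hSv⟩ :=
    exists_isMaxDissocSet_forall_adj_mem_staticIncluded_and_not_adj hbu hbv hu hv hiso huv
  by_contra! hlt
  have hcard : ((staticIncluded G ∩ G.neighborSet u) \ {v}).ncard + 1 =
      (staticIncluded G ∩ G.neighborSet u).ncard :=
    Set.ncard_sdiff_singleton_add_one ⟨hv, huv⟩
  have : Nonempty V := ⟨u⟩
  obtain ⟨w, hw⟩ := (Set.ncard_le_one_iff_subset_singleton
    (s := (staticIncluded G ∩ G.neighborSet u) \ {v})).1 (by omega)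
  have eq_v (x : V) (hx : x ∈ S.erase w) (hux : G.Adj u x) : x = v := by
    by_contra hxv
    exact Finset.ne_of_mem_erase hx (hw ⟨⟨hSu x (Finset.mem_of_mem_erase hx) hux, hux⟩, hxv⟩)
  refine not_isDissocSet_insert_erase hu hS w <| (hS.1.subset (S.erase_subset w)).insert
    (fun x hx y hy hux huy => (eq_v x hx hux).trans (eq_v y hy huy).symm) fun x hx hux y hy => ?_
  rw [eq_v x hx hux]
  exact hSv y (Finset.mem_of_mem_erase hy)

theorem eq_of_adj_of_mem_staticIncluded {v x y : V} (hv : v ∈ staticIncluded G)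
    (hx : x ∈ staticIncluded G) (hy : y ∈ staticIncluded G) (hvx : G.Adj v x)
    (hvy : G.Adj v y) : x = y := by
  obtain ⟨S, hS⟩ := exists_isMaxDissocSet G
  exact hS.1 v (hv S hS) x (hx S hS) y (hy S hS) hvx hvy

theorem isolatedVertexNeighbors_union_isolatedEdgeNeighbors (G : SimpleGraph V) (u : V) :
    isolatedVertexNeighbors G u ∪ isolatedEdgeNeighbors G u =
      staticIncluded G ∩ G.neighborSet u := by
  ext w
  refine ⟨fun hw => hw.elim (fun h => ⟨h.1, h.2.2⟩) fun h => ⟨h.1, h.2.2⟩, ?_⟩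
  rintro ⟨hw, huw⟩
  by_cases hiso : ∀ x ∈ staticIncluded G, ¬ G.Adj w x
  · exact .inl ⟨hw, hiso, huw⟩
  · push Not at hiso
    obtain ⟨x, hx, hwx⟩ := hiso
    exact .inr ⟨hw, ⟨x, hx, hwx,
      fun y hy hwy => eq_of_adj_of_mem_staticIncluded hw hy hx hwy hwx,
      fun y hy hxy => eq_of_adj_of_mem_staticIncluded hx hy hw hxy hwx.symm⟩, huw⟩

theorem ncard_isolatedVertexNeighbors_add_ncard_isolatedEdgeNeighbors (G : SimpleGraph V) (u : V) :
    (isolatedVertexNeighbors G u).ncard + (isolatedEdgeNeighbors G u).ncard =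
      (staticIncluded G ∩ G.neighborSet u).ncard := by
  rw [← isolatedVertexNeighbors_union_isolatedEdgeNeighbors, Set.ncard_union_eq]
  rw [Set.disjoint_left]
  rintro w ⟨-, hiso, -⟩ ⟨-, ⟨x, hx, hwx, -⟩, -⟩
  exact hiso x hx hwx

theorem ncard_staticIncluded_inter_neighborSet_lt (hb : ∀ v, G.Adj u v → G.IsBridge s(u, v))
    (h : (isolatedEdgeNeighbors G u).Nonempty) :
    (staticIncluded G ∩ G.neighborSet u).ncard < (staticIncluded G).ncard := by
  obtain ⟨w, -, ⟨x, hx, hwx, -⟩, huw⟩ := h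
  have hux : ¬ G.Adj u x := not_adj_of_adj_of_isBridge (hb w huw) hwx
  exact Set.ncard_lt_ncard
    ((Set.ssubset_iff_of_subset Set.inter_subset_left).2 ⟨x, hx, fun h => hux h.2⟩)

theorem tree_staticExcluded_neighbors_staticIncluded_general
    (hG : ∀ v, G.Adj u v → ∀ w, G.Adj v w → G.IsBridge s(v, w)) (hu : u ∈ staticExcluded G)
    {p q : ℕ} (hp : (isolatedVertexNeighbors G u).ncard = p)
    (hq : (isolatedEdgeNeighbors G u).ncard = q) :
    (4 ≤ p + 2 * q ∨ p = 3) ∧ 3 ≤ (staticIncluded G).ncard := by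
  have hb (v : V) (huv : G.Adj u v) : G.IsBridge s(u, v) :=
    Sym2.eq_swap ▸ hG v huv u huv.symm
  have hsum : p + q = (staticIncluded G ∩ G.neighborSet u).ncard := by
    rw [← hp, ← hq, ncard_isolatedVertexNeighbors_add_ncard_isolatedEdgeNeighbors]
  have htwo := two_le_ncard_staticIncluded_inter_neighborSet hb hu
  have hthree (hp0 : p ≠ 0) : 3 ≤ (staticIncluded G ∩ G.neighborSet u).ncard := by
    obtain ⟨v, hv, hiso, huv⟩ := Set.nonempty_of_ncard_ne_zero (hp ▸ hp0)
    exact three_le_ncard_staticIncluded_inter_neighborSet hb (hG v huv) hu hv hiso huv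
  have hle : (staticIncluded G ∩ G.neighborSet u).ncard ≤ (staticIncluded G).ncard :=
    Set.ncard_le_ncard Set.inter_subset_left
  have hlt (hq0 : q ≠ 0) : (staticIncluded G ∩ G.neighborSet u).ncard < (staticIncluded G).ncard :=
    ncard_staticIncluded_inter_neighborSet_lt hb (Set.nonempty_of_ncard_ne_zero (hq ▸ hq0))
  omega

end StaticIncludedNeighbors

/-- Let `T` be a tree and let `u` be a static-excluded vertex of `T` adjacent to exactly
`p` isolated vertices of `T[𝒜_T]` and to exactly `q` end-vertices of isolated edges of
`T[𝒜_T]`.  Then `p + 2q ≥ 4` or `p = 3`; consequently (as `𝒩_T ≠ ∅` here), `|𝒜_T| ≥ 3`. -/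
theorem tree_staticExcluded_neighbors_staticIncluded {V : Type*} [Fintype V]
    [DecidableEq V] (T : SimpleGraph V) (hT : T.IsTree)
    (u : V) (hu : u ∈ staticExcluded T) (p q : ℕ)
    (hp : {w : V | w ∈ staticIncluded T ∧
      (∀ x ∈ staticIncluded T, ¬ T.Adj w x) ∧ T.Adj u w}.ncard = p)
    (hq : {w : V | w ∈ staticIncluded T ∧
      (∃ x ∈ staticIncluded T, T.Adj w x ∧
        (∀ y ∈ staticIncluded T, T.Adj w y → y = x) ∧
        (∀ y ∈ staticIncluded T, T.Adj x y → y = w)) ∧ T.Adj u w}.ncard = q) :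
    (4 ≤ p + 2 * q ∨ p = 3) ∧ 3 ≤ (staticIncluded T).ncard :=
  tree_staticExcluded_neighbors_staticIncluded_general
    (fun _ _ _ hvw => isAcyclic_iff_forall_adj_isBridge.1 hT.isAcyclic hvw) hu hp hq
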